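/- Let G be a finite bipartite simple graph with parts L and R (every edge joins a vertex of L to a vertex of R) whose girth equals 8, in which every vertex of L has degree 4, and suppose that any two cycles of length 8 in G with distinct edge sets have no common vertex belonging to L. Let S ⊆ L with |S| = a be nonempty and such that every vertex of R has at most 2 neighbors in S, let b be the number of vertices of R having an odd number of neighbors in S, and suppose b < a. Then: if b = 0 then a ≥ 13; if b = 2 then a ≥ 13; if b = 4 then a ≥ 12; and if b = 6 then a ≥ 10. -/

import Mathlib

open SimpleGraph

/-!
Let `H` be the graph on `S` in which two variable nodes are adjacent when they share a check. An
`n`-cycle of `H` subdivides to a `2n`-cycle of `G`, so `H` has no triangle, and the condition on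
8-cycles leaves at most one 4-cycle of `H` through each vertex.

Count the walks `v, u, w` of length two in `H` from a fixed `v`. Those with `w = v` number `deg v`;
a neighbour `w` of `v` receives none; any other `w` receives at most `1 + k.choose 2`, where `k` is
the number of common neighbours and `k.choose 2` the number of 4-cycles having `v` and `w` opposite.
Hence `∑ u ~ v, deg u ≤ |S|`. Summing over `v` gives `∑ v, deg v ^ 2 ≤ |S| ^ 2`, and by
Cauchy–Schwarz `(∑ v, deg v) ^ 2 ≤ |S| ^ 3`. Since `∑ v, deg v ≥ γ |S| - b`, every elementary
trapping set satisfies `(γ a - b) ^ 2 ≤ a ^ 3`, which excludes the small values of `a`.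
-/

lemma le_choose_two_add_one : ∀ n : ℕ, n ≤ n.choose 2 + 1
  | 0 => Nat.zero_le _
  | n + 1 => by simp [Nat.choose_succ_succ' n 1]

section FourCycles

variable {W : Type*} {H : SimpleGraph W} {v w x y : W}

lemma exists_isCycle_length_eq_four (hvx : H.Adj v x) (hxw : H.Adj x w) (hwy : H.Adj w y)
    (hyv : H.Adj y v) (hvw : v ≠ w) (hxy : x ≠ y) :
    ∃ c : H.Walk v v, c.IsCycle ∧ c.length = 4 ∧ c.support = [v, x, w, y, v] := by
  refine ⟨.cons hvx (.cons hxw (.cons hwy (.cons hyv .nil))), ?_, rfl, rfl⟩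
  simp [Walk.cons_isCycle_iff, Walk.cons_isPath_iff, hvx.ne, hvx.ne', hxw.ne, hwy.ne, hyv.ne,
    hvw.symm, hxy, hvw]

lemma commonNeighbors_subsingleton (hH : 4 < H.egirth) (hvw : v ≠ w) :
    (H.commonNeighbors v w).Subsingleton := by
  rintro x ⟨hvx, hwx⟩ y ⟨hvy, hwy⟩
  by_contra hxy
  obtain ⟨c, hc, hlen, -⟩ := exists_isCycle_length_eq_four hvx hwx.symm hwy hvy.symm hvw hxy
  exact (hH.trans_le (egirth_le_length hc)).ne' (by simp [hlen])

variable (H) [Fintype W] [DecidableRel H.Adj]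

lemma sum_degree_sq_eq_sum_sum_degree :
    ∑ v, H.degree v ^ 2 = ∑ v, ∑ u ∈ H.neighborFinset v, H.degree u := by
  simp only [neighborFinset_eq_filter, Finset.sum_filter]
  rw [Finset.sum_comm]
  refine Finset.sum_congr rfl fun u _ ↦ ?_
  simp only [H.adj_comm _ u]
  rw [← Finset.sum_filter, ← neighborFinset_eq_filter, Finset.sum_const, smul_eq_mul,
    card_neighborFinset_eq_degree, sq]

variable [DecidableEq W]

lemma sum_degree_neighborFinset_eq_sum_card_inter (v : W) :
    ∑ u ∈ H.neighborFinset v, H.degree u =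
      ∑ w, (H.neighborFinset v ∩ H.neighborFinset w).card := by
  have := Finset.sum_card_bipartiteAbove_eq_sum_card_bipartiteBelow H.Adj
    (s := H.neighborFinset v) (t := Finset.univ)
  convert this using 2 with u _ w
  · rw [Finset.bipartiteAbove, ← neighborFinset_eq_filter, card_neighborFinset_eq_degree]
  · congr 1
    ext u
    simp only [Finset.mem_inter, Finset.bipartiteBelow, Finset.mem_filter, mem_neighborFinset,
      H.adj_comm w]

/-- The 4-cycles through `v`. The cycle `v, x, w, y` is recorded as the vertex `w` opposite to `v`
together with the pair `{x, y}`, so it is counted once and not once per orientation. -/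
def fourCyclesAt (v : W) : Finset (Σ _ : W, Finset W) :=
  (Finset.univ.erase v).sigma fun w ↦
    (H.neighborFinset v ∩ H.neighborFinset w).powersetCard 2

lemma card_fourCyclesAt (v : W) :
    (fourCyclesAt H v).card =
      ∑ w ∈ Finset.univ.erase v, (H.neighborFinset v ∩ H.neighborFinset w).card.choose 2 := by
  simp only [fourCyclesAt, Finset.card_sigma, Finset.card_powersetCard]

variable {H}

lemma mem_fourCyclesAt {v : W} {q : Σ _ : W, Finset W} :
    q ∈ fourCyclesAt H v ↔ ∃ x y, v ≠ q.1 ∧ x ≠ y ∧ q.2 = {x, y} ∧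
      H.Adj v x ∧ H.Adj x q.1 ∧ H.Adj q.1 y ∧ H.Adj y v := by
  simp only [fourCyclesAt, Finset.mem_sigma, Finset.mem_erase, Finset.mem_univ, and_true,
    Finset.mem_powersetCard, Finset.card_eq_two]
  constructor
  · rintro ⟨hne, hsub, x, y, hxy, hq⟩
    simp only [hq, Finset.insert_subset_iff, Finset.singleton_subset_iff, Finset.mem_inter,
      mem_neighborFinset] at hsub
    exact ⟨x, y, hne.symm, hxy, hq, hsub.1.1, hsub.1.2.symm, hsub.2.2, hsub.2.1.symm⟩
  · rintro ⟨x, y, hne, hxy, hq, hvx, hxw, hwy, hyv⟩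
    refine ⟨hne.symm, ?_, x, y, hxy, hq⟩
    simp [hq, Finset.insert_subset_iff, hvx, hxw.symm, hwy, hyv.symm]

lemma card_inter_neighborFinset_eq_zero (hH : H.CliqueFree 3) {v w : W} (hvw : H.Adj v w) :
    (H.neighborFinset v ∩ H.neighborFinset w).card = 0 := by
  rw [Finset.card_eq_zero, Finset.eq_empty_iff_forall_notMem]
  intro x hx
  simp only [Finset.mem_inter, mem_neighborFinset] at hx
  exact hH {v, w, x} (is3Clique_triple_iff.2 ⟨hvw, hx.1, hx.2⟩)

lemma injOn_insert_fourCyclesAt (hH : H.CliqueFree 3) (v : W) :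
    Set.InjOn (fun q : Σ _ : W, Finset W ↦ insert v (insert q.1 q.2)) (fourCyclesAt H v) := by
  have hadj {q} (hq : q ∈ fourCyclesAt H v) :
      q.1 ≠ v ∧ ¬ H.Adj v q.1 ∧ ∀ u ∈ q.2, H.Adj v u := by
    obtain ⟨x, y, hvw, -, hpair, hvx, hxw, -, hyv⟩ := mem_fourCyclesAt.1 hq
    refine ⟨hvw.symm, fun h ↦ hH {v, x, q.1} (is3Clique_triple_iff.2 ⟨hvx, h, hxw⟩), ?_⟩
    simp [hpair, hvx, hyv.symm]
  rintro ⟨w, p⟩ hq ⟨w', p'⟩ hq' heq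
  obtain ⟨hwv, hvw, hp⟩ := hadj hq
  obtain ⟨-, -, hp'⟩ := hadj hq'
  have hmem u : u = v ∨ u = w ∨ u ∈ p ↔ u = v ∨ u = w' ∨ u ∈ p' := by
    simpa using Finset.ext_iff.1 heq u
  obtain rfl : w = w' := by
    rcases (hmem w).1 (.inr (.inl rfl)) with h | h | h
    · exact absurd h hwv
    · exact h
    · exact absurd (hp' w h) hvw
  have hmem_iff u (hu : H.Adj v u) : u ∈ p ↔ u ∈ p' := by
    have huw : u ≠ w := fun h ↦ hvw (h ▸ hu)
    simpa [hu.ne', huw] using hmem u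
  obtain rfl : p = p' :=
    Finset.ext fun u ↦
      ⟨fun hu ↦ (hmem_iff u (hp u hu)).1 hu, fun hu ↦ (hmem_iff u (hp' u hu)).2 hu⟩
  rfl

lemma sum_degree_neighborFinset_add_one_le (hH : H.CliqueFree 3) (v : W) :
    ∑ u ∈ H.neighborFinset v, H.degree u + 1 ≤ Fintype.card W + (fourCyclesAt H v).card := by
  let f w := (H.neighborFinset v ∩ H.neighborFinset w).card
  have hf w : f w + (if H.Adj v w then 1 else 0) ≤ 1 + (f w).choose 2 := by
    split_ifs with hvw
    · simp [f, card_inter_neighborFinset_eq_zero hH hvw]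
    · simpa [add_comm] using le_choose_two_add_one (f w)
  have hsum := Finset.sum_le_sum fun w (_ : w ∈ Finset.univ.erase v) ↦ hf w
  have hdeg : ∑ w ∈ Finset.univ.erase v, (if H.Adj v w then 1 else 0) = H.degree v := by
    rw [Finset.sum_erase _ (by simp), ← Finset.card_filter, ← neighborFinset_eq_filter,
      card_neighborFinset_eq_degree]
  have hfv : f v = H.degree v := by simp [f]
  have hcard : (Finset.univ.erase v).card + 1 = Fintype.card W :=
    Finset.card_erase_add_one (Finset.mem_univ v)
  rw [Finset.sum_add_distrib, Finset.sum_add_distrib, hdeg, ← Finset.card_eq_sum_ones,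
    ← card_fourCyclesAt] at hsum
  rw [sum_degree_neighborFinset_eq_sum_card_inter,
    ← Finset.add_sum_erase _ f (Finset.mem_univ v)]
  omega

lemma sum_degree_sq_add_card_le (hH : H.CliqueFree 3) :
    ∑ v, H.degree v ^ 2 + Fintype.card W ≤
      Fintype.card W ^ 2 + ∑ v, (fourCyclesAt H v).card := by
  have := Finset.sum_le_sum fun v (_ : v ∈ Finset.univ) ↦ sum_degree_neighborFinset_add_one_le hH v
  simpa [Finset.sum_add_distrib, sum_degree_sq_eq_sum_sum_degree, sq (Fintype.card W)] using this

lemma sq_sum_degree_le_card_pow_three (hH : H.CliqueFree 3)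
    (hfour : ∀ v, (fourCyclesAt H v).card ≤ 1) :
    (∑ v, H.degree v) ^ 2 ≤ Fintype.card W ^ 3 := by
  have hle : ∑ v, (fourCyclesAt H v).card ≤ Fintype.card W := by
    simpa using Finset.sum_le_sum fun v (_ : v ∈ Finset.univ) ↦ hfour v
  have hsq : ∑ v, H.degree v ^ 2 ≤ Fintype.card W ^ 2 := by
    have := sum_degree_sq_add_card_le hH
    omega
  calc (∑ v, H.degree v) ^ 2 ≤ Fintype.card W * ∑ v, H.degree v ^ 2 := sq_sum_le_card_mul_sum_sq
    _ ≤ Fintype.card W * Fintype.card W ^ 2 := by gcongr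
    _ = Fintype.card W ^ 3 := by ring

end FourCycles

section NormalGraph

variable {V : Type*}

/-- `S` is an elementary set of variable nodes: no two vertices of `S` are adjacent, and every
vertex has at most two neighbors in `S`. No bipartition is mentioned; the vertices outside `S` that
have a neighbor in `S` play the role of the checks. -/
structure IsElementary (G : SimpleGraph V) (S : Set V) : Prop where
  isIndepSet : G.IsIndepSet S
  encard_le_two (r : V) : (S ∩ G.neighborSet r).encard ≤ 2

/-- The unsatisfied checks of a finite set `S`: the vertices with an odd number of neighbors in `S`.
They are the `b` checks of an `(a, b)`-trapping set. -/
def oddChecks (G : SimpleGraph V) (S : Set V) : Set V :=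
  {r | Odd (S ∩ G.neighborSet r).ncard}

/-- The normal graph of an elementary set `S`: its vertices are those of `S`, and two of them are
adjacent when they have a check in common. -/
def normalGraph (G : SimpleGraph V) (S : Set V) : SimpleGraph S where
  Adj u v := u ≠ v ∧ ∃ r, G.Adj u r ∧ G.Adj r v
  symm := ⟨fun _ _ ⟨huv, r, hur, hrv⟩ ↦ ⟨huv.symm, r, hrv.symm, hur.symm⟩⟩
  loopless := ⟨fun _ h ↦ h.1 rfl⟩

variable {G : SimpleGraph V} {S : Set V}

/-- A check joining two adjacent vertices of the normal graph. -/
noncomputable def commonCheck {u v : S} (h : (normalGraph G S).Adj u v) : V :=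
  h.2.choose

lemma adj_commonCheck {u v : S} (h : (normalGraph G S).Adj u v) : G.Adj u (commonCheck h) :=
  h.2.choose_spec.1

lemma commonCheck_adj {u v : S} (h : (normalGraph G S).Adj u v) : G.Adj (commonCheck h) v :=
  h.2.choose_spec.2

/-- The walk of `G` obtained from a walk of the normal graph by inserting a common check in
the middle of each step. -/
noncomputable def expandWalk {u v : S} : (normalGraph G S).Walk u v → G.Walk u v
  | .nil => .nil
  | .cons h p => .cons (adj_commonCheck h) (.cons (commonCheck_adj h) (expandWalk p))

lemma length_expandWalk {u v : S} (p : (normalGraph G S).Walk u v) :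
    (expandWalk p).length = 2 * p.length := by
  induction p with
  | nil => rfl
  | cons h p ih => simp only [expandWalk, Walk.length_cons, ih]; ring

lemma nonempty_of_mem_oddChecks {r : V} (hr : r ∈ oddChecks G S) :
    (S ∩ G.neighborSet r).Nonempty :=
  Set.nonempty_of_ncard_ne_zero (Odd.pos hr).ne'

lemma finite_oddChecks (hS : S.Finite) (hN : ∀ v ∈ S, (G.neighborSet v).Finite) :
    (oddChecks G S).Finite := by
  refine (hS.biUnion hN).subset fun r hr ↦ ?_
  obtain ⟨v, hv, hrv⟩ := nonempty_of_mem_oddChecks hr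
  exact Set.mem_biUnion hv hrv.symm

namespace IsElementary

variable (hS : IsElementary G S)
include hS

lemma notMem_of_adj {x r : V} (hx : x ∈ S) (hxr : G.Adj x r) : r ∉ S :=
  fun hr ↦ hS.isIndepSet hx hr hxr.ne hxr

lemma eq_or_eq {x y z r : V} (hx : x ∈ S) (hy : y ∈ S) (hz : z ∈ S) (hxr : G.Adj x r)
    (hyr : G.Adj y r) (hzr : G.Adj z r) (hxy : x ≠ y) : z = x ∨ z = y := by
  by_contra! h
  have : ({x, y, z} : Set V).encard ≤ 2 := (Set.encard_le_encard (by
    simp [Set.insert_subset_iff, *, hxr.symm, hyr.symm, hzr.symm])).trans (hS.encard_le_two r)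
  rw [Set.encard_eq_three.2 ⟨x, y, z, hxy, h.1.symm, h.2.symm, rfl⟩] at this
  norm_num at this

lemma sym2_eq_of_adj {u v x y : S} {r : V} (huv : u ≠ v) (hxy : x ≠ y) (hur : G.Adj u r)
    (hrv : G.Adj r v) (hxr : G.Adj x r) (hry : G.Adj r y) : s(x, y) = s(u, v) := by
  have hx := hS.eq_or_eq u.2 v.2 x.2 hur hrv.symm hxr (Subtype.coe_ne_coe.2 huv)
  have hy := hS.eq_or_eq u.2 v.2 y.2 hur hrv.symm hry.symm (Subtype.coe_ne_coe.2 huv)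
  rw [← Subtype.ext_iff, ← Subtype.ext_iff] at hx hy
  grind

lemma coe_mem_support_expandWalk {u v x : S} (p : (normalGraph G S).Walk u v) :
    ↑x ∈ (expandWalk p).support ↔ x ∈ p.support := by
  induction p with
  | nil => simp [expandWalk, Subtype.ext_iff]
  | @cons u v w h p ih =>
    have hne : (x : V) ≠ commonCheck h := fun hx ↦
      hS.notMem_of_adj u.2 (adj_commonCheck h) (hx ▸ x.2)
    simp [expandWalk, ih, hne, Subtype.ext_iff]

lemma mem_edges_of_mem_support_expandWalk {u v x y : S} {r : V} (p : (normalGraph G S).Walk u v)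
    (hxy : x ≠ y) (hxr : G.Adj x r) (hry : G.Adj r y) (hr : r ∈ (expandWalk p).support) :
    s(x, y) ∈ p.edges := by
  induction p with
  | @nil u => exact absurd (by simp_all [expandWalk]) (hS.notMem_of_adj x.2 hxr)
  | @cons u v w h p ih =>
    simp only [expandWalk, Walk.support_cons, List.mem_cons] at hr
    rcases hr with rfl | rfl | hr
    · exact absurd u.2 (hS.notMem_of_adj x.2 hxr)
    · exact List.mem_cons.2 <| .inl <|
        hS.sym2_eq_of_adj h.ne hxy (adj_commonCheck h) (commonCheck_adj h) hxr hry
    · exact List.mem_cons_of_mem _ (ih hr)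

lemma isPath_expandWalk {u v : S} {p : (normalGraph G S).Walk u v} (hp : p.IsPath) :
    (expandWalk p).IsPath := by
  induction p with
  | nil => exact .nil
  | cons h p ih =>
    rw [Walk.cons_isPath_iff] at hp
    rw [expandWalk, Walk.cons_isPath_iff, Walk.cons_isPath_iff, Walk.support_cons, List.mem_cons,
      not_or, hS.coe_mem_support_expandWalk]
    exact ⟨⟨ih hp.1, fun hr ↦ hp.2 (p.fst_mem_support_of_mem_edges
        (hS.mem_edges_of_mem_support_expandWalk p h.1 (adj_commonCheck h) (commonCheck_adj h) hr))⟩,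
      (adj_commonCheck h).ne, hp.2⟩

lemma isCycle_expandWalk {v : S} {p : (normalGraph G S).Walk v v} (hp : p.IsCycle) :
    (expandWalk p).IsCycle := by
  cases p with
  | nil => exact absurd hp Walk.not_isCycle_nil
  | cons h p =>
    rw [Walk.cons_isCycle_iff] at hp
    have hr : commonCheck h ∉ (expandWalk p).support := fun hr ↦ hp.2
      (hS.mem_edges_of_mem_support_expandWalk p h.1 (adj_commonCheck h) (commonCheck_adj h) hr)
    rw [expandWalk, Walk.cons_isCycle_iff, Walk.cons_isPath_iff, Walk.edges_cons, List.mem_cons,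
      not_or]
    refine ⟨⟨hS.isPath_expandWalk hp.1, hr⟩, ?_, fun he ↦
      hr (Walk.snd_mem_support_of_mem_edges _ he)⟩
    simp [Subtype.coe_ne_coe.2 h.1, (adj_commonCheck h).ne]

lemma cliqueFree_three_normalGraph (hG : 6 < G.egirth) : (normalGraph G S).CliqueFree 3 := by
  intro s hs
  obtain ⟨v, p, hp, hlen⟩ := is3Clique_iff_exists_cycle_length_three.1 ⟨s, hs⟩
  have hle := egirth_le_length (hS.isCycle_expandWalk hp)
  rw [length_expandWalk, hlen] at hle
  exact hG.not_ge hle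

lemma exists_isCycle_of_mem_fourCyclesAt [Fintype S] [DecidableEq S]
    [DecidableRel (normalGraph G S).Adj] {v : S} {q : Σ _ : S, Finset S}
    (hq : q ∈ fourCyclesAt (normalGraph G S) v) :
    ∃ c : G.Walk v v, c.IsCycle ∧ c.length = 8 ∧
      ∀ u : S, ↑u ∈ c.support ↔ u ∈ insert v (insert q.1 q.2) := by
  obtain ⟨x, y, hvw, hxy, hpair, hvx, hxw, hwy, hyv⟩ := mem_fourCyclesAt.1 hq
  obtain ⟨p, hp, hlen, hsupp⟩ := exists_isCycle_length_eq_four hvx hxw hwy hyv hvw hxy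
  refine ⟨expandWalk p, hS.isCycle_expandWalk hp, by rw [length_expandWalk, hlen], fun u ↦ ?_⟩
  rw [hS.coe_mem_support_expandWalk, hsupp, hpair]
  simp only [List.mem_cons, List.not_mem_nil, Finset.mem_insert, Finset.mem_singleton]
  tauto

lemma card_fourCyclesAt_normalGraph_le_one [Fintype S] [DecidableEq S]
    [DecidableRel (normalGraph G S).Adj] (hG : 6 < G.egirth) {v : S}
    (hcyc : ∀ c₁ c₂ : G.Walk v v, c₁.IsCycle → c₂.IsCycle → c₁.length = 8 → c₂.length = 8 →
      c₁.edgeSet = c₂.edgeSet) :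
    (fourCyclesAt (normalGraph G S) v).card ≤ 1 := by
  rw [Finset.card_le_one]
  refine fun q hq q' hq' ↦
    injOn_insert_fourCyclesAt (hS.cliqueFree_three_normalGraph hG) v hq hq' ?_
  obtain ⟨c, hc, hlen, hsupp⟩ := hS.exists_isCycle_of_mem_fourCyclesAt hq
  obtain ⟨c', hc', hlen', hsupp'⟩ := hS.exists_isCycle_of_mem_fourCyclesAt hq'
  have hedges e : e ∈ c.edges ↔ e ∈ c'.edges := Set.ext_iff.1 (hcyc c c' hc hc' hlen hlen') e
  ext u
  simp only [← hsupp, ← hsupp', Walk.mem_support_iff_exists_mem_edges_of_not_nil hc.not_nil,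
    Walk.mem_support_iff_exists_mem_edges_of_not_nil hc'.not_nil, hedges]

lemma mem_oddChecks {r : V} : r ∈ oddChecks G S ↔ ∃ v, S ∩ G.neighborSet r = {v} := by
  have hfin : (S ∩ G.neighborSet r).Finite := Set.finite_of_encard_le_coe (hS.encard_le_two r)
  have hle : (S ∩ G.neighborSet r).ncard ≤ 2 := by
    exact_mod_cast hfin.cast_ncard_eq.trans_le (hS.encard_le_two r)
  rw [← Set.ncard_eq_one, oddChecks, Set.mem_ofPred_eq]
  generalize (S ∩ G.neighborSet r).ncard = n at hle
  interval_cases n <;> decide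

lemma exists_ne_of_notMem_oddChecks {v : S} {r : V} (hvr : G.Adj v r) (hr : r ∉ oddChecks G S) :
    ∃ u : S, (normalGraph G S).Adj v u ∧ G.Adj u r := by
  by_contra! h
  refine hr (hS.mem_oddChecks.2 ⟨v, Set.eq_singleton_iff_unique_mem.2 ⟨⟨v.2, hvr.symm⟩, ?_⟩⟩)
  intro u ⟨hu, hru⟩
  by_contra huv
  exact h ⟨u, hu⟩ ⟨fun hvu ↦ huv (congrArg Subtype.val hvu.symm), r, hvr, hru⟩ hru.symm

lemma ncard_neighborSet_le [Fintype S] [DecidableRel (normalGraph G S).Adj] (hG : 4 < G.egirth)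
    {v : S} (hN : (G.neighborSet v).Finite) :
    (G.neighborSet v).ncard ≤
      (G.neighborSet v ∩ oddChecks G S).ncard + (normalGraph G S).degree v := by
  rw [← Set.ncard_inter_add_ncard_sdiff_eq_ncard _ (oddChecks G S) hN,
    Set.ncard_eq_toFinset_card _ (hN.sdiff), ← card_neighborFinset_eq_degree]
  gcongr
  refine Finset.card_le_card_of_forall_subsingleton (fun r (u : S) ↦ G.Adj u r) (fun r hr ↦ ?_)
    fun u hu r hr s hs ↦ ?_
  · obtain ⟨hvr, hodd⟩ := hN.sdiff.mem_toFinset.1 hr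
    obtain ⟨u, hvu, hur⟩ := hS.exists_ne_of_notMem_oddChecks hvr hodd
    exact ⟨u, (mem_neighborFinset ..).2 hvu, hur⟩
  · have hvu := Subtype.coe_ne_coe.2 ((mem_neighborFinset ..).1 hu).ne
    exact commonNeighbors_subsingleton hG hvu
      ⟨(hN.sdiff.mem_toFinset.1 hr.1).1, hr.2⟩ ⟨(hN.sdiff.mem_toFinset.1 hs.1).1, hs.2⟩

lemma sum_ncard_inter_oddChecks [Fintype S] (hN : ∀ v ∈ S, (G.neighborSet v).Finite) :
    ∑ v : S, (G.neighborSet v ∩ oddChecks G S).ncard = (oddChecks G S).ncard := by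
  classical
  have hfin := finite_oddChecks S.toFinite hN
  have hleft (v : S) : (G.neighborSet v ∩ oddChecks G S).ncard =
      (Finset.bipartiteAbove (fun (v : S) r ↦ G.Adj v r) hfin.toFinset v).card := by
    rw [← Set.ncard_coe_finset]
    congr 1
    ext r
    simp [and_comm]
  have hright (r) (hr : r ∈ hfin.toFinset) :
      (Finset.bipartiteBelow (fun (v : S) r ↦ G.Adj v r) Finset.univ r).card = 1 := by
    obtain ⟨v, hv⟩ := hS.mem_oddChecks.1 (hfin.mem_toFinset.1 hr)
    have hvr : v ∈ S ∩ G.neighborSet r := hv ▸ rfl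
    refine Finset.card_eq_one.2 ⟨⟨v, hvr.1⟩, ?_⟩
    ext u
    simpa [Finset.bipartiteBelow, adj_comm, Subtype.ext_iff] using Set.ext_iff.1 hv u
  simp_rw [hleft]
  rw [Finset.sum_card_bipartiteAbove_eq_sum_card_bipartiteBelow, Finset.sum_congr rfl hright,
    Finset.sum_const, smul_eq_mul, mul_one, Set.ncard_eq_toFinset_card _ hfin]

lemma sum_ncard_neighborSet_le [Fintype S] [DecidableRel (normalGraph G S).Adj]
    (hG : 4 < G.egirth) (hN : ∀ v ∈ S, (G.neighborSet v).Finite) :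
    ∑ v : S, (G.neighborSet v).ncard ≤
      (oddChecks G S).ncard + ∑ v, (normalGraph G S).degree v := by
  rw [← hS.sum_ncard_inter_oddChecks hN, ← Finset.sum_add_distrib]
  exact Finset.sum_le_sum fun v _ ↦ hS.ncard_neighborSet_le hG (hN v v.2)

theorem sq_mul_ncard_sub_ncard_oddChecks_le (hfin : S.Finite) (hG : 6 < G.egirth)
    (hcyc : ∀ v ∈ S, ∀ c₁ c₂ : G.Walk v v, c₁.IsCycle → c₂.IsCycle →
      c₁.length = 8 → c₂.length = 8 → c₁.edgeSet = c₂.edgeSet)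
    {γ : ℕ} (hreg : ∀ v ∈ S, (G.neighborSet v).encard = γ) :
    (γ * S.ncard - (oddChecks G S).ncard) ^ 2 ≤ S.ncard ^ 3 := by
  classical
  have := hfin.fintype
  have hN v (hv : v ∈ S) : (G.neighborSet v).Finite :=
    Set.finite_of_encard_eq_coe (hreg v hv)
  have hdeg : γ * S.ncard ≤ (oddChecks G S).ncard + ∑ v, (normalGraph G S).degree v := by
    have hsum : ∑ v : S, (G.neighborSet v).ncard = γ * S.ncard := by
      simp [Set.ncard_def, hreg, mul_comm, ← Nat.card_eq_fintype_card, Nat.card_coe_set_eq]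
    exact hsum ▸ hS.sum_ncard_neighborSet_le (lt_trans (by norm_num) hG) hN
  calc (γ * S.ncard - (oddChecks G S).ncard) ^ 2
      ≤ (∑ v, (normalGraph G S).degree v) ^ 2 := by gcongr; omega
    _ ≤ Fintype.card S ^ 3 := sq_sum_degree_le_card_pow_three (hS.cliqueFree_three_normalGraph hG)
        fun v ↦ hS.card_fourCyclesAt_normalGraph_le_one hG (hcyc v v.2)
    _ = S.ncard ^ 3 := by rw [← Nat.card_eq_fintype_card, Nat.card_coe_set_eq]

end IsElementary

end NormalGraph

section Bipartite

variable {V : Type*} {G : SimpleGraph V} {L R S : Set V}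

lemma oddChecks_subset (h : G.IsBipartiteWith L R) (hSL : S ⊆ L) : oddChecks G S ⊆ R := by
  intro r hr
  obtain ⟨v, hv, hrv⟩ := nonempty_of_mem_oddChecks hr
  exact h.mem_of_mem_adj (hSL hv) hrv.symm

lemma isElementary_of_isBipartiteWith (h : G.IsBipartiteWith L R) (hSL : S ⊆ L)
    (hcheck : ∀ r ∈ R, (S ∩ G.neighborSet r).encard ≤ 2) : IsElementary G S where
  isIndepSet _ hx _ hy _ hxy :=
    h.disjoint.notMem_of_mem_left (hSL hy) (h.mem_of_mem_adj (hSL hx) hxy)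
  encard_le_two r := by
    rcases (S ∩ G.neighborSet r).eq_empty_or_nonempty with hempty | ⟨v, hv, hrv⟩
    · simp [hempty]
    · exact hcheck r (h.mem_of_mem_adj (hSL hv) hrv.symm)

end Bipartite

theorem stmt14_general {V : Type*} {G : SimpleGraph V} {L R : Set V} (hLR : G.IsBipartiteWith L R)
    (hgirth : 8 ≤ G.egirth) (hreg : ∀ v ∈ L, Nat.card (G.neighborSet v) = 4)
    (hcyc : ∀ (u v : V) (c₁ : G.Walk u u) (c₂ : G.Walk v v),
      c₁.IsCycle → c₂.IsCycle → c₁.length = 8 → c₂.length = 8 → c₁.edgeSet ≠ c₂.edgeSet →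
      ∀ w ∈ L, w ∈ c₁.support → w ∉ c₂.support)
    {S : Set V} (hSL : S ⊆ L) {a : ℕ} (haS : Nat.card S = a)
    (hcheck : ∀ r ∈ R, Nat.card {v : V | v ∈ S ∧ G.Adj r v} ≤ 2)
    {b : ℕ} (hb : b = Nat.card {r : V | r ∈ R ∧ Odd (Nat.card {v : V | v ∈ S ∧ G.Adj r v})})
    (hba : b < a) :
    (b = 0 → 13 ≤ a) ∧ (b = 2 → 13 ≤ a) ∧ (b = 4 → 12 ≤ a) ∧ (b = 6 → 10 ≤ a) := by
  have hfin : S.Finite := Set.finite_of_ncard_ne_zero (haS.trans_ne (by omega))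
  have hS : IsElementary G S := isElementary_of_isBipartiteWith hLR hSL fun r hr ↦ by
    rw [← (hfin.inter_of_left _).cast_ncard_eq]
    exact_mod_cast hcheck r hr
  have hodd : (oddChecks G S).ncard = b :=
    hb ▸ congrArg Set.ncard (Set.inter_eq_right.2 (oddChecks_subset hLR hSL)).symm
  have hreg' v (hv : v ∈ S) : (G.neighborSet v).encard = (4 : ℕ) := by
    rw [← (Set.finite_of_ncard_ne_zero ((hreg v (hSL hv)).trans_ne four_ne_zero)).cast_ncard_eq]
    exact congrArg _ (hreg v (hSL hv))
  have hle := hS.sq_mul_ncard_sub_ncard_oddChecks_le hfin (lt_of_lt_of_le (by norm_num) hgirth)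
    (fun v hv c₁ c₂ hc₁ hc₂ hl₁ hl₂ ↦ by_contra fun hne ↦ hcyc v v c₁ c₂ hc₁ hc₂ hl₁ hl₂ hne v
      (hSL hv) c₁.start_mem_support c₂.start_mem_support) hreg'
  rw [hodd, show S.ncard = a from haS] at hle
  clear hb hodd haS
  refine ⟨?_, ?_, ?_, ?_⟩ <;>
  · rintro rfl
    by_contra! hlt
    interval_cases a <;> omega

/-- In a variable-regular Tanner graph of girth `8` with variable degree `4` in which no two
8-cycles with distinct edge sets share a variable node, the smallest sizes of `(a,b)`-ETSs
with `b < a` are at least `a = 13, 13, 12, 10` for `b = 0, 2, 4, 6` respectively. -/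
theorem stmt14 {V : Type*} [Fintype V] (G : SimpleGraph V) (L R : Set V)
    (hdisj : Disjoint L R) (hcover : L ∪ R = Set.univ)
    (hbip : ∀ ⦃u v : V⦄, G.Adj u v → (u ∈ L ∧ v ∈ R) ∨ (u ∈ R ∧ v ∈ L))
    (hgirth : G.girth = 8)
    (hreg : ∀ v ∈ L, Nat.card (G.neighborSet v) = 4)
    (hcyc : ∀ (u v : V) (c₁ : G.Walk u u) (c₂ : G.Walk v v),
      c₁.IsCycle → c₂.IsCycle → c₁.length = 8 → c₂.length = 8 →
      {e : Sym2 V | e ∈ c₁.edges} ≠ {e : Sym2 V | e ∈ c₂.edges} →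
      ∀ w ∈ L, w ∈ c₁.support → w ∉ c₂.support)
    (S : Set V) (hSL : S ⊆ L) (hne : S.Nonempty)
    (a : ℕ) (haS : Nat.card S = a)
    (hcheck : ∀ r ∈ R, Nat.card {v : V | v ∈ S ∧ G.Adj r v} ≤ 2)
    (b : ℕ) (hb : b = Nat.card {r : V | r ∈ R ∧ Odd (Nat.card {v : V | v ∈ S ∧ G.Adj r v})})
    (hba : b < a) :
    (b = 0 → 13 ≤ a) ∧ (b = 2 → 13 ≤ a) ∧ (b = 4 → 12 ≤ a) ∧ (b = 6 → 10 ≤ a) :=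
  stmt14_general ⟨hdisj, hbip⟩ ((ENat.toNat_eq_iff (by norm_num)).1 hgirth).ge hreg hcyc hSL haS
    hcheck hb hba
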